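/- arXiv:1902.00427 — 2 statements merged into one kernel-verified Lean document; each statement's English description precedes it below -/
import Mathlib

section
/- (Seip's local reproducing formula) Let α > 1, 0 < R < 1, and let f be analytic on the unit disc 𝔻 with (1/π)∫_𝔻 |f(w)| (1−|w|²)^{α−2} dw < ∞ (f ∈ A¹_α(𝔻)). Then for every z ∈ 𝔻: f(z) = C^α(R)^{−1} · (1/π) ∫_{B_{ϱ_𝔻}(z,R)} f(w) (1 − z w̄)^{−α} (1−|w|²)^{α−2} dw, where C^α(R) = (1/(α−1))(1 − (1−R²)^{α−1}) and B_{ϱ_𝔻}(z,R) = {w ∈ 𝔻 : |(z−w)/(1−z̄w)| < R} is the pseudohyperbolic ball of center z and radius R. -/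
open MeasureTheory

/-- The pseudohyperbolic ball `B_{ϱ_𝔻}(z, R) = {w ∈ 𝔻 : |(z - w)/(1 - z̄ w)| < R}`. -/
def pseudohyperbolicBall (z : ℂ) (R : ℝ) : Set ℂ :=
  {w : ℂ | ‖w‖ < 1 ∧ ‖(z - w) / (1 - starRingEnd ℂ z * w)‖ < R}

/-!
For `z = 0` the formula is the mean value property, integrated over the circles `‖w‖ = r` with
`0 < r < R`. The general case reduces to it by the substitution `w = φ_z(u)`, where `φ_z` is the
Möbius involution exchanging `0` and `z`: it maps `ball 0 R` onto the pseudohyperbolic ball, and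
`1 - z w̄` and `1 - ‖w‖²` become `1 - u z̄` and `1 - ‖u‖²`, each multiplied by the conformal factor
`‖φ_z'(u)‖`. The powers of this factor cancel against the Jacobian, which leaves the case `z = 0`
for the holomorphic function `u ↦ (1 - u z̄)^(-α) f(φ_z(u))`, whose value at `0` is `f z`.
-/

open Set Metric Real ComplexConjugate

section PolarCoordinates

variable {E : Type*} [NormedAddCommGroup E] [NormedSpace ℝ E]

theorem integrableOn_smul_comp_polarCoord_symm {h : ℂ → E} (hh : Integrable h) :
    IntegrableOn (fun p : ℝ × ℝ ↦ p.1 • h (Complex.polarCoord.symm p)) polarCoord.target := by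
  have h_prod : Integrable (h ∘ Complex.measurableEquivRealProd.symm) :=
    Complex.volume_preserving_equiv_real_prod.symm.integrable_comp_of_integrable hh
  have h_polar := (integrableOn_image_iff_integrableOn_abs_det_fderiv_smul volume
    polarCoord.open_target.measurableSet
    (fun p _ ↦ (hasFDerivAt_polarCoord_symm p).hasFDerivWithinAt) polarCoord.symm.injOn _).1
    h_prod.integrableOn
  refine h_polar.congr_fun (fun p hp ↦ ?_) polarCoord.open_target.measurableSet
  simp only [det_fderivPolarCoordSymm, abs_of_pos (mem_Ioi.1 hp.1)]
  rfl

theorem integral_Ioo_circleMap_eq_circleAverage (h : ℂ → E) (c : ℂ) (r : ℝ) :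
    ∫ θ in Ioo (-π) π, h (circleMap c r θ) = (2 * π) • circleAverage h c r := by
  rw [circleAverage_eq_integral_add (-π),
    intervalIntegral.integral_comp_add_right (fun θ ↦ h (circleMap c r θ)),
    smul_inv_smul₀ two_pi_pos.ne', ← integral_Ioc_eq_integral_Ioo,
    ← intervalIntegral.integral_of_le (by linarith [pi_pos])]
  congr 1 <;> ring

theorem integral_eq_integral_Ioi_circleAverage {h : ℂ → E} (hh : Integrable h) :
    ∫ w, h w = ∫ r in Ioi 0, (2 * π * r) • circleAverage h 0 r := by
  have h_symm (p : ℝ × ℝ) : Complex.polarCoord.symm p = circleMap 0 p.1 p.2 := by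
    simp only [Complex.polarCoord_symm_apply, circleMap_zero, Complex.exp_mul_I, Complex.ofReal_cos,
      Complex.ofReal_sin]
  have h_int := integrableOn_smul_comp_polarCoord_symm hh
  rw [← Complex.integral_comp_polarCoord_symm]
  simp only [h_symm, polarCoord_target, Measure.volume_eq_prod] at h_int ⊢
  rw [setIntegral_prod _ h_int]
  simp only [integral_smul, integral_Ioo_circleMap_eq_circleAverage, smul_smul, mul_comm]

theorem integral_ball_eq_integral_Ioo_circleAverage {h : ℂ → E} {R : ℝ}
    (hh : IntegrableOn h (ball 0 R)) :
    ∫ w in ball 0 R, h w = ∫ r in Ioo 0 R, (2 * π * r) • circleAverage h 0 r := by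
  have h_avg {r : ℝ} (hr : 0 < r) : circleAverage ((ball 0 R).indicator h) 0 r =
      (Iio R).indicator (circleAverage h 0) r := by
    by_cases hrR : r < R <;> simp [circleAverage_def, indicator, abs_of_pos hr, hrR]
  rw [← integral_indicator measurableSet_ball,
    integral_eq_integral_Ioi_circleAverage (hh.integrable_indicator measurableSet_ball),
    ← Ioi_inter_Iio, ← setIntegral_indicator measurableSet_Iio]
  refine setIntegral_congr_fun measurableSet_Ioi fun r hr ↦ ?_
  simp only [h_avg hr, indicator_apply]
  split_ifs <;> simp

end PolarCoordinates

section RadialWeights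

variable {E : Type*} [NormedAddCommGroup E] [NormedSpace ℂ E] [CompleteSpace E]

theorem integral_ball_radial_smul_of_differentiableOn {g : ℂ → E} {R : ℝ} {ω : ℝ → ℝ}
    (hg : DifferentiableOn ℂ g (ball 0 R)) (hint : IntegrableOn (fun u ↦ ω ‖u‖ • g u) (ball 0 R)) :
    ∫ u in ball 0 R, ω ‖u‖ • g u = (2 * π * ∫ r in Ioo 0 R, r * ω r) • g 0 := by
  have h_avg {r : ℝ} (hr : r ∈ Ioo 0 R) :
      circleAverage (fun u ↦ ω ‖u‖ • g u) 0 r = ω r • g 0 := by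
    have h_mean : circleAverage g 0 r = g 0 := by
      refine DiffContOnCl.circleAverage (hg.diffContOnCl_ball (closedBall_subset_ball ?_))
      rw [abs_of_pos hr.1]
      exact hr.2
    calc circleAverage (fun u ↦ ω ‖u‖ • g u) 0 r
        = circleAverage (fun u ↦ ω r • g u) 0 r :=
          circleAverage_congr_sphere fun u hu ↦ by
            simp only [mem_sphere_zero_iff_norm.1 hu, abs_of_pos hr.1]
      _ = ω r • g 0 := by rw [circleAverage_fun_smul, h_mean]
  rw [integral_ball_eq_integral_Ioo_circleAverage hint,
    setIntegral_congr_fun measurableSet_Ioo fun r hr ↦ by rw [h_avg hr, smul_smul, mul_assoc],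
    integral_smul_const, integral_const_mul]

end RadialWeights

theorem integral_image_eq_integral_sq_norm_deriv_smul {E : Type*} [NormedAddCommGroup E]
    [NormedSpace ℝ E] {s : Set ℂ} (hs : MeasurableSet s) {φ φ' : ℂ → ℂ}
    (hφ : ∀ u ∈ s, HasDerivWithinAt φ (φ' u) s u) (hφ_inj : InjOn φ s) (F : ℂ → E) :
    ∫ w in φ '' s, F w = ∫ u in s, ‖φ' u‖ ^ 2 • F (φ u) := by
  have h_det (b : ℂ) :
      ((ContinuousLinearMap.toSpanSingleton ℂ b).restrictScalars ℝ).det = ‖b‖ ^ 2 := by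
    simp [ContinuousLinearMap.det, LinearMap.det_restrictScalars, Algebra.norm_complex_apply,
      Complex.normSq_eq_norm_sq]
  rw [integral_image_eq_integral_abs_det_fderiv_smul volume hs
    (fun u hu ↦ (hφ u hu).hasFDerivWithinAt.restrictScalars ℝ) hφ_inj]
  simp only [h_det, abs_pow, abs_norm]

theorem ofReal_mul_cpow {q : ℝ} (hq : 0 < q) {a : ℂ} (ha : a ≠ 0) (β : ℂ) :
    ((q : ℂ) * a) ^ β = (q : ℂ) ^ β * a ^ β := by
  have hq' : (q : ℂ) ≠ 0 := Complex.ofReal_ne_zero.2 hq.ne'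
  rw [Complex.cpow_def_of_ne_zero (mul_ne_zero hq' ha), Complex.log_ofReal_mul hq ha,
    Complex.ofReal_log hq.le, add_mul, Complex.exp_add, ← Complex.cpow_def_of_ne_zero hq',
    ← Complex.cpow_def_of_ne_zero ha]

/-- The Möbius involution `φ_z(w) = (z - w) / (1 - z̄ w)` of the unit disc, which exchanges `0` and
`z`; `‖diskInvolution z w‖` is the pseudohyperbolic distance from `z` to `w`. -/
noncomputable def diskInvolution (z w : ℂ) : ℂ :=
  (z - w) / (1 - conj z * w)

section DiskInvolution

variable {z u : ℂ}

@[simp]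
theorem diskInvolution_zero (z : ℂ) : diskInvolution z 0 = z := by
  simp [diskInvolution]

theorem one_sub_mul_conj_mem_slitPlane (hu : ‖u‖ < 1) (hz : ‖z‖ < 1) :
    1 - u * conj z ∈ Complex.slitPlane := by
  rw [sub_eq_add_neg]
  apply Complex.mem_slitPlane_of_norm_lt_one
  rw [norm_neg, norm_mul, Complex.norm_conj]
  exact mul_lt_one_of_nonneg_of_lt_one_left (norm_nonneg u) hu hz.le

theorem one_sub_conj_mul_ne_zero (hz : ‖z‖ < 1) (hu : ‖u‖ < 1) : 1 - conj z * u ≠ 0 :=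
  mul_comm u (conj z) ▸ Complex.slitPlane_ne_zero (one_sub_mul_conj_mem_slitPlane hu hz)

theorem one_sub_sq_norm_pos (hz : ‖z‖ < 1) : 0 < 1 - ‖z‖ ^ 2 :=
  sub_pos.2 (pow_lt_one₀ (norm_nonneg z) hz two_ne_zero)

theorem diskInvolution_diskInvolution (hz : ‖z‖ < 1) (hu : ‖u‖ < 1) :
    diskInvolution z (diskInvolution z u) = u := by
  have h_den : 1 - conj z * u ≠ 0 := one_sub_conj_mul_ne_zero hz hu
  have h_sq : 1 - conj z * z ≠ 0 := one_sub_conj_mul_ne_zero hz hz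
  have h_num : z - diskInvolution z u = u * (1 - conj z * z) / (1 - conj z * u) := by
    rw [diskInvolution, eq_div_iff h_den, sub_mul, div_mul_cancel₀ _ h_den]
    ring
  have h_den' : 1 - conj z * diskInvolution z u = (1 - conj z * z) / (1 - conj z * u) := by
    rw [diskInvolution, eq_div_iff h_den, sub_mul, mul_assoc, div_mul_cancel₀ _ h_den]
    ring
  rw [diskInvolution, h_num, h_den', div_div_div_cancel_right₀ h_den, mul_div_cancel_right₀ _ h_sq]

theorem hasDerivAt_diskInvolution (hz : ‖z‖ < 1) (hu : ‖u‖ < 1) :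
    HasDerivAt (diskInvolution z) (-((1 - conj z * z) / (1 - conj z * u) ^ 2)) u := by
  have h_num : HasDerivAt (fun w ↦ z - w) (-1) u := (hasDerivAt_id u).const_sub z
  have h_den : HasDerivAt (fun w ↦ 1 - conj z * w) (-conj z) u := by
    simpa using ((hasDerivAt_id u).const_mul (conj z)).const_sub 1
  refine (h_num.div h_den (one_sub_conj_mul_ne_zero hz hu)).congr_deriv ?_
  ring

theorem differentiableOn_diskInvolution (hz : ‖z‖ < 1) :
    DifferentiableOn ℂ (diskInvolution z) (ball 0 1) := fun _ hu ↦
  (hasDerivAt_diskInvolution hz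
    (mem_ball_zero_iff.1 hu)).differentiableAt.differentiableWithinAt

theorem norm_deriv_diskInvolution (hz : ‖z‖ < 1) (hu : ‖u‖ < 1) :
    ‖deriv (diskInvolution z) u‖ = (1 - ‖z‖ ^ 2) / ‖1 - conj z * u‖ ^ 2 := by
  have h_sq : 1 - conj z * z = ((1 - ‖z‖ ^ 2 : ℝ) : ℂ) := by
    rw [Complex.conj_mul']; norm_cast
  rw [(hasDerivAt_diskInvolution hz hu).deriv, norm_neg, norm_div, norm_pow, h_sq,
    Complex.norm_of_nonneg (one_sub_sq_norm_pos hz).le]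

theorem norm_deriv_diskInvolution_pos (hz : ‖z‖ < 1) (hu : ‖u‖ < 1) :
    0 < ‖deriv (diskInvolution z) u‖ := by
  rw [norm_deriv_diskInvolution hz hu]
  exact div_pos (one_sub_sq_norm_pos hz)
    (pow_pos (norm_pos_iff.2 (one_sub_conj_mul_ne_zero hz hu)) 2)

theorem one_sub_mul_conj_diskInvolution (hz : ‖z‖ < 1) (hu : ‖u‖ < 1) :
    1 - z * conj (diskInvolution z u) = ‖deriv (diskInvolution z) u‖ * (1 - u * conj z) := by
  have h_den : 1 - conj z * u ≠ 0 := one_sub_conj_mul_ne_zero hz hu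
  have h_den' : 1 - z * conj u ≠ 0 := by simpa using (map_ne_zero conj).2 h_den
  rw [norm_deriv_diskInvolution hz hu, mul_comm u]
  push_cast
  simp only [← Complex.conj_mul', diskInvolution, map_div₀, map_sub, map_mul, map_one,
    Complex.conj_conj]
  field_simp
  ring

theorem one_sub_sq_norm_diskInvolution (hz : ‖z‖ < 1) (hu : ‖u‖ < 1) :
    1 - ‖diskInvolution z u‖ ^ 2 = ‖deriv (diskInvolution z) u‖ * (1 - ‖u‖ ^ 2) := by
  have h_den : 0 < ‖1 - conj z * u‖ := norm_pos_iff.2 (one_sub_conj_mul_ne_zero hz hu)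
  have h_polar : ‖1 - conj z * u‖ ^ 2 - ‖z - u‖ ^ 2 = (1 - ‖z‖ ^ 2) * (1 - ‖u‖ ^ 2) := by
    simp only [← Complex.normSq_eq_norm_sq, Complex.normSq_apply, Complex.sub_re, Complex.sub_im,
      Complex.mul_re, Complex.mul_im, Complex.conj_re, Complex.conj_im, Complex.one_re,
      Complex.one_im]
    ring
  rw [norm_deriv_diskInvolution hz hu, diskInvolution, norm_div, div_pow, div_mul_eq_mul_div,
    ← h_polar, sub_div, div_self (pow_pos h_den 2).ne']

theorem norm_diskInvolution_lt_one (hz : ‖z‖ < 1) (hu : ‖u‖ < 1) : ‖diskInvolution z u‖ < 1 := by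
  have h_pos : 0 < 1 - ‖diskInvolution z u‖ ^ 2 := by
    rw [one_sub_sq_norm_diskInvolution hz hu]
    exact mul_pos (norm_deriv_diskInvolution_pos hz hu) (one_sub_sq_norm_pos hu)
  exact (sq_lt_one_iff₀ (norm_nonneg _)).1 (sub_pos.1 h_pos)

theorem injOn_diskInvolution (hz : ‖z‖ < 1) : InjOn (diskInvolution z) (ball 0 1) :=
  LeftInvOn.injOn fun _ hu ↦ diskInvolution_diskInvolution hz (mem_ball_zero_iff.1 hu)

theorem image_diskInvolution_ball {R : ℝ} (hz : ‖z‖ < 1) (hR : R ≤ 1) :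
    diskInvolution z '' ball 0 R = pseudohyperbolicBall z R := by
  ext w
  constructor
  · rintro ⟨u, hu, rfl⟩
    have huR : ‖u‖ < R := mem_ball_zero_iff.1 hu
    have hu1 : ‖u‖ < 1 := huR.trans_le hR
    refine ⟨norm_diskInvolution_lt_one hz hu1, ?_⟩
    rwa [← diskInvolution, diskInvolution_diskInvolution hz hu1]
  · rintro ⟨hw, hwR⟩
    exact ⟨diskInvolution z w, mem_ball_zero_iff.2 hwR, diskInvolution_diskInvolution hz hw⟩

theorem closure_pseudohyperbolicBall_subset_ball {R : ℝ} (hz : ‖z‖ < 1) (hR : R < 1) :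
    closure (pseudohyperbolicBall z R) ⊆ ball 0 1 := by
  have h_sub : closedBall (0 : ℂ) R ⊆ ball 0 1 := closedBall_subset_ball hR
  have h_compact : IsCompact (diskInvolution z '' closedBall 0 R) :=
    (isCompact_closedBall 0 R).image_of_continuousOn
      ((differentiableOn_diskInvolution hz).continuousOn.mono h_sub)
  calc closure (pseudohyperbolicBall z R)
      ⊆ diskInvolution z '' closedBall 0 R := by
        rw [← image_diskInvolution_ball hz hR.le]
        exact closure_minimal (image_mono ball_subset_closedBall) h_compact.isClosed
    _ ⊆ ball 0 1 := image_subset_iff.2 fun u hu ↦ mem_ball_zero_iff.2 <|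
        norm_diskInvolution_lt_one hz (mem_ball_zero_iff.1 (h_sub hu))

end DiskInvolution

/-- The reproducing kernel `K^α_𝔻(z, w) = (1 - z w̄)^{-α}` of the Bergman space `A²_α(𝔻)`. -/
noncomputable def bergmanKernel (α : ℝ) (z w : ℂ) : ℂ :=
  (1 - z * conj w) ^ (-(α : ℂ))

/-- The normalising constant `C^α(R)` of Seip's formula, the mass that `π⁻¹ (1 - ‖w‖²)^(α - 2) dw`
gives to `ball 0 R`. At `α = 1` the division by zero makes it `0` instead of
`-log (1 - R ^ 2)`. -/
noncomputable def localBergmanConst (α R : ℝ) : ℝ :=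
  1 / (α - 1) * (1 - (1 - R ^ 2) ^ (α - 1))

section LocalReproducingFormula

variable {α R : ℝ} {z : ℂ}

theorem bergmanKernel_zero_left (α : ℝ) (w : ℂ) : bergmanKernel α 0 w = 1 := by
  simp [bergmanKernel]

theorem differentiableOn_bergmanKernel (α : ℝ) (hz : ‖z‖ < 1) :
    DifferentiableOn ℂ (fun u ↦ bergmanKernel α u z) (ball 0 1) := fun _ hu ↦
  DifferentiableWithinAt.cpow_const (by fun_prop)
    (one_sub_mul_conj_mem_slitPlane (mem_ball_zero_iff.1 hu) hz)

theorem bergmanKernel_comp_diskInvolution (α : ℝ) {u : ℂ} (hz : ‖z‖ < 1) (hu : ‖u‖ < 1) :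
    ((‖deriv (diskInvolution z) u‖ ^ 2 : ℝ) : ℂ) * (bergmanKernel α z (diskInvolution z u) *
      ((1 - ‖diskInvolution z u‖ ^ 2) ^ (α - 2) : ℝ)) =
      ((1 - ‖u‖ ^ 2) ^ (α - 2) : ℝ) * bergmanKernel α u z := by
  have hq : 0 < ‖deriv (diskInvolution z) u‖ := norm_deriv_diskInvolution_pos hz hu
  have h_kernel : bergmanKernel α z (diskInvolution z u) =
      (‖deriv (diskInvolution z) u‖ ^ (-α) : ℝ) * bergmanKernel α u z := by
    rw [bergmanKernel, one_sub_mul_conj_diskInvolution hz hu, ofReal_mul_cpow hq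
      (Complex.slitPlane_ne_zero (one_sub_mul_conj_mem_slitPlane hu hz)), ← Complex.ofReal_neg,
      ← Complex.ofReal_cpow hq.le, bergmanKernel, Complex.ofReal_neg]
  rw [h_kernel, one_sub_sq_norm_diskInvolution hz hu]
  generalize ‖deriv (diskInvolution z) u‖ = q at hq
  have h_cancel : q ^ 2 * q ^ (-α) * q ^ (α - 2) = 1 := by
    have h_exp : 2 + -α + (α - 2) = 0 := by ring
    rw [← rpow_two, ← rpow_add hq, ← rpow_add hq, h_exp, rpow_zero]
  rw [mul_rpow hq.le (one_sub_sq_norm_pos hu).le]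
  have h_cancel' := congrArg Complex.ofReal h_cancel
  push_cast at h_cancel' ⊢
  linear_combination ((1 - ‖u‖ ^ 2) ^ (α - 2) : ℝ) * bergmanKernel α u z * h_cancel'

theorem integral_Ioo_mul_one_sub_sq_rpow (hα : α ≠ 1) (hR0 : 0 ≤ R) (hR1 : R < 1) :
    ∫ r in Ioo 0 R, r * (1 - r ^ 2) ^ (α - 2) = localBergmanConst α R / 2 := by
  have h_pos : ∀ r ∈ uIcc 0 R, 0 < 1 - r ^ 2 := by
    rw [uIcc_of_le hR0]
    exact fun r hr ↦ sub_pos.2 (pow_lt_one₀ hr.1 (hr.2.trans_lt hR1) two_ne_zero)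
  have h_deriv : ∀ r ∈ uIcc 0 R,
      HasDerivAt (localBergmanConst α · / 2) (r * (1 - r ^ 2) ^ (α - 2)) r := fun r hr ↦ by
    have h_base : HasDerivAt (fun r : ℝ ↦ 1 - r ^ 2) (-(2 * r)) r := by
      simpa using (hasDerivAt_pow 2 r).const_sub 1
    refine ((((h_base.rpow_const (.inl (h_pos r hr).ne')).const_sub 1).const_mul
      (1 / (α - 1))).div_const 2).congr_deriv ?_
    have h_exp : α - 1 ≠ 0 := sub_ne_zero.2 hα
    rw [sub_sub, one_add_one_eq_two]
    field_simp
  have h_cont : ContinuousOn (fun r : ℝ ↦ r * (1 - r ^ 2) ^ (α - 2)) (uIcc 0 R) :=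
    continuousOn_id.mul <| ContinuousOn.rpow_const (by fun_prop) fun r hr ↦ .inl (h_pos r hr).ne'
  rw [← integral_Ioc_eq_integral_Ioo, ← intervalIntegral.integral_of_le hR0,
    intervalIntegral.integral_eq_sub_of_hasDerivAt h_deriv h_cont.intervalIntegrable]
  simp [localBergmanConst]

theorem localBergmanConst_ne_zero (hα : α ≠ 1) (hR0 : 0 < R) (hR1 : R < 1) :
    localBergmanConst α R ≠ 0 := by
  have h_exp : α - 1 ≠ 0 := sub_ne_zero.2 hα
  have h_pos : 0 < 1 - R ^ 2 := sub_pos.2 (pow_lt_one₀ hR0.le hR1 two_ne_zero)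
  have h_ne_one : 1 - R ^ 2 ≠ 1 := (sub_lt_self 1 (pow_pos hR0 2)).ne
  refine mul_ne_zero (one_div_ne_zero h_exp) (sub_ne_zero.2 fun h ↦ h_ne_one ?_)
  exact (rpow_left_inj h_pos.le zero_le_one h_exp).1 (by rw [← h, one_rpow])

variable {E : Type*} [NormedAddCommGroup E] [NormedSpace ℂ E]

theorem diffContOnCl_bergmanKernel_smul_comp_diskInvolution {f : ℂ → E} (α : ℝ) (hz : ‖z‖ < 1)
    (hR : R < 1) (hf : DiffContOnCl ℂ f (pseudohyperbolicBall z R)) :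
    DiffContOnCl ℂ (fun u ↦ bergmanKernel α u z • f (diskInvolution z u)) (ball 0 R) := by
  have h_sub : closedBall (0 : ℂ) R ⊆ ball 0 1 := closedBall_subset_ball hR
  have h_maps : MapsTo (diskInvolution z) (ball 0 R) (pseudohyperbolicBall z R) :=
    mapsTo_iff_image_subset.2 (image_diskInvolution_ball hz hR.le).subset
  exact ((differentiableOn_bergmanKernel α hz).diffContOnCl_ball h_sub).smul
    (hf.comp ((differentiableOn_diskInvolution hz).diffContOnCl_ball h_sub) h_maps)

theorem integral_ball_one_sub_sq_norm_rpow_smul [CompleteSpace E] {g : ℂ → E} (hα : α ≠ 1)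
    (hR0 : 0 ≤ R) (hR1 : R < 1) (hg : DiffContOnCl ℂ g (ball 0 R)) :
    ∫ u in ball 0 R, (1 - ‖u‖ ^ 2) ^ (α - 2) • g u = (π * localBergmanConst α R) • g 0 := by
  have h_int : IntegrableOn (fun u ↦ (1 - ‖u‖ ^ 2) ^ (α - 2) • g u) (ball 0 R) := by
    refine (ContinuousOn.integrableOn_compact (isCompact_closedBall 0 R)
      (ContinuousOn.smul (M := ℝ) ?_ hg.continuousOn_ball)).mono_set ball_subset_closedBall
    exact ContinuousOn.rpow_const (by fun_prop) fun u hu ↦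
      .inl (one_sub_sq_norm_pos ((mem_closedBall_zero_iff.1 hu).trans_lt hR1)).ne'
  rw [integral_ball_radial_smul_of_differentiableOn (ω := fun r ↦ (1 - r ^ 2) ^ (α - 2))
    hg.differentiableOn h_int, integral_Ioo_mul_one_sub_sq_rpow hα hR0 hR1]
  congr 1
  ring

theorem integral_pseudohyperbolicBall_eq_integral_ball (α : ℝ) (hz : ‖z‖ < 1) (hR : R ≤ 1)
    (f : ℂ → E) :
    ∫ w in pseudohyperbolicBall z R,
        (bergmanKernel α z w * ((1 - ‖w‖ ^ 2) ^ (α - 2) : ℝ)) • f w =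
      ∫ u in ball 0 R,
        (1 - ‖u‖ ^ 2) ^ (α - 2) • bergmanKernel α u z • f (diskInvolution z u) := by
  have h_lt : ∀ u ∈ ball (0 : ℂ) R, ‖u‖ < 1 := fun u hu ↦ (mem_ball_zero_iff.1 hu).trans_le hR
  rw [← image_diskInvolution_ball hz hR, integral_image_eq_integral_sq_norm_deriv_smul
    measurableSet_ball (fun u hu ↦ (hasDerivAt_diskInvolution hz
      (h_lt u hu)).differentiableAt.hasDerivAt.hasDerivWithinAt)
    ((injOn_diskInvolution hz).mono (ball_subset_ball hR))]
  refine setIntegral_congr_fun measurableSet_ball fun u hu ↦ ?_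
  simp only [← Complex.coe_smul, smul_smul, bergmanKernel_comp_diskInvolution α hz (h_lt u hu)]

theorem seip_local_reproducing_formula_general [CompleteSpace E] {f : ℂ → E} (hα : α ≠ 1)
    (hR0 : 0 < R) (hR1 : R < 1) (hz : z ∈ ball 0 1)
    (hf : DiffContOnCl ℂ f (pseudohyperbolicBall z R)) :
    f z = (((localBergmanConst α R)⁻¹ : ℝ) * (1 / π : ℝ) : ℂ) •
      ∫ w in pseudohyperbolicBall z R,
        (bergmanKernel α z w * ((1 - ‖w‖ ^ 2) ^ (α - 2) : ℝ)) • f w := by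
  rw [mem_ball_zero_iff] at hz
  have hC : localBergmanConst α R ≠ 0 := localBergmanConst_ne_zero hα hR0 hR1
  rw [integral_pseudohyperbolicBall_eq_integral_ball α hz hR1.le,
    integral_ball_one_sub_sq_norm_rpow_smul hα hR0.le hR1
      (diffContOnCl_bergmanKernel_smul_comp_diskInvolution α hz hR1 hf),
    bergmanKernel_zero_left, one_smul, diskInvolution_zero, ← Complex.ofReal_mul, Complex.coe_smul,
    smul_smul]
  have h_one : (localBergmanConst α R)⁻¹ * (1 / π) * (π * localBergmanConst α R) = 1 := by
    field_simp
  rw [h_one, one_smul]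

end LocalReproducingFormula

/-- **Seip's local reproducing formula for the Bergman space.**
Let `α > 1`, `0 < R < 1`, and let `f ∈ A¹_α(𝔻)` be analytic on the unit disc with
`(1/π) ∫_𝔻 |f(w)| (1 - |w|²)^{α-2} dw < ∞`.  Then for every `z ∈ 𝔻`,
`f(z) = C^α(R)⁻¹ (1/π) ∫_{B_{ϱ_𝔻}(z,R)} f(w) (1 - z w̄)^{-α} (1 - |w|²)^{α-2} dw`,
where `C^α(R) = (1/(α-1))(1 - (1 - R²)^{α-1})`. -/
theorem seip_local_reproducing_formula
    (α : ℝ) (hα : 1 < α)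
    (R : ℝ) (hR0 : 0 < R) (hR1 : R < 1)
    (f : ℂ → ℂ) (hf : DifferentiableOn ℂ f (Metric.ball (0 : ℂ) 1))
    (hfint : IntegrableOn (fun w => ‖f w‖ * (1 - ‖w‖ ^ 2) ^ (α - 2))
      (Metric.ball (0 : ℂ) 1) volume) :
    ∀ z ∈ Metric.ball (0 : ℂ) 1,
      f z = (((((1 / (α - 1)) * (1 - (1 - R ^ 2) ^ (α - 1)))⁻¹ : ℝ)) : ℂ) *
        (((1 / Real.pi : ℝ)) : ℂ) *
        ∫ w in pseudohyperbolicBall z R,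
          f w * (1 - z * starRingEnd ℂ w) ^ (-(α : ℂ)) *
            (((1 - ‖w‖ ^ 2) ^ (α - 2) : ℝ) : ℂ) := by
  intro z hz
  have hf' : DiffContOnCl ℂ f (pseudohyperbolicBall z R) :=
    (hf.mono (closure_pseudohyperbolicBall_subset_ball (mem_ball_zero_iff.1 hz) hR1)).diffContOnCl
  simpa only [localBergmanConst, bergmanKernel, smul_eq_mul, mul_comm, mul_left_comm] using
    seip_local_reproducing_formula_general hα.ne' hR0 hR1 hz hf'
end

section
/- Let W > 0, let f ∈ L¹(ℝ) be nonzero with distributional Fourier transform supported in [−πW, πW], and let Ω ⊆ ℝ be measurable with ρ_ℝ(Ω,W) = W · sup_{t∈ℝ} |Ω ∩ [t, t+1/W]| < 1/π. Let N ∈ L¹(ℝ) vanish a.e. outside Ω. Then f is the unique minimizer, over all g ∈ L¹(ℝ) with Fourier transform supported in [−πW, πW], of g ↦ ‖(f+N) − g‖_{L¹(ℝ)}: for every such g, ‖N‖₁ ≤ ‖(f+N) − g‖₁, with strict inequality whenever g ≠ f in L¹(ℝ). -/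
open MeasureTheory

/-! On `[-π / 2, π / 2]` the function `x / sin x` is the sum of an absolutely convergent series
`∑ n : ℤ, c n * exp (2 * I * n * x)`, and `∑ n, |c n| = π / 2`: the signs of the `c n` alternate,
so this sum is the value of `x / sin x` at `π / 2`. The Fourier transform of a normalized box of
width `1 / W` is `sin x / x` with `x = π * w / W`, so the superposition `K` of its translates by
`-n / W` with weights `c n` has Fourier transform one on the band. Hence `h = K ⋆ h` for every
band-limited `h`, and as each box sees at most the fraction `ρ` of `Ω`, this gives the
Donoho–Logan bound `∫_Ω |h| ≤ (π / 2) ρ ‖h‖₁ < ‖h‖₁ / 2`. For `h = f - g ≠ 0` it says that replacing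
`f` by `g` adds more to the `L¹` norm of the residual off `Ω` than it can remove on `Ω`. -/

open Set
open scoped FourierTransform Convolution ENNReal Real RealInnerProductSpace

section FourierUniqueness

variable {V E : Type*} [NormedAddCommGroup V] [InnerProductSpace ℝ V] [FiniteDimensional ℝ V]
  [MeasurableSpace V] [BorelSpace V] [NormedAddCommGroup E] [NormedSpace ℂ E] {u v h : V → E}

lemma fourier_sub_of_integrable (hu : Integrable u) (hv : Integrable v) (w : V) :
    𝓕 (u - v) w = 𝓕 u w - 𝓕 v w := by
  simp only [Real.fourier_eq, Pi.sub_apply, smul_sub]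
  exact integral_sub ((Real.fourierIntegral_convergent_iff w).2 hu)
    ((Real.fourierIntegral_convergent_iff w).2 hv)

variable [CompleteSpace E]

lemma integral_fourier_smul_schwartz (hu : Integrable u) (φ : SchwartzMap V ℂ) :
    ∫ w, φ w • 𝓕 u w = ∫ x, 𝓕 φ x • u x := by
  simpa using! VectorFourier.integral_bilin_fourierIntegral_eq_flip (L := innerₗ V)
    (ContinuousLinearMap.lsmul ℂ ℂ).flip Real.continuous_fourierChar continuous_inner
    hu φ.integrable

lemma ae_eq_zero_of_fourier_ae_eq_zero (hu : Integrable u) (hu0 : 𝓕 u =ᵐ[volume] 0) :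
    u =ᵐ[volume] 0 := by
  refine ae_eq_zero_of_integral_contDiff_smul_eq_zero hu.locallyIntegrable fun g hg hgs ↦ ?_
  have hgc : ContDiff ℝ (⊤ : ℕ∞) (fun x ↦ (g x : ℂ)) := Complex.ofRealCLM.contDiff.comp hg
  have hgcs : HasCompactSupport (fun x ↦ (g x : ℂ)) := hgs.comp_left Complex.ofReal_zero
  let G : SchwartzMap V ℂ := hgcs.toSchwartzMap hgc
  calc ∫ x, g x • u x = ∫ x, 𝓕 (𝓕⁻ G) x • u x := by
        rw [FourierTransform.fourier_fourierInv_eq]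
        exact integral_congr_ae (.of_forall fun x ↦ (Complex.coe_smul (g x) (u x)).symm)
    _ = ∫ w, (𝓕⁻ G) w • 𝓕 u w := (integral_fourier_smul_schwartz hu _).symm
    _ = 0 := integral_eq_zero_of_ae <| hu0.mono fun w hw ↦ by simp [hw]

lemma ae_eq_convolution_of_fourier_eq_one {K : V → ℂ} (hK : Integrable K) (hh : Integrable h)
    (hKh : ∀ᵐ w, 𝓕 h w ≠ 0 → 𝓕 K w = 1) :
    h =ᵐ[volume] K ⋆[ContinuousLinearMap.lsmul ℂ ℂ] h := by
  have hconv : Integrable (K ⋆[ContinuousLinearMap.lsmul ℂ ℂ] h) := hK.integrable_convolution _ hh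
  refine sub_ae_eq_zero _ _ |>.1 <| ae_eq_zero_of_fourier_ae_eq_zero (hh.sub hconv) ?_
  filter_upwards [hKh] with w hw
  rw [fourier_sub_of_integrable hh hconv, Real.fourier_smul_convolution_eq hK hh]
  by_cases hw0 : 𝓕 h w = 0
  · simp [hw0]
  · simp [hw hw0]

end FourierUniqueness

section Convolution

lemma setLIntegral_enorm_convolution_le {G 𝕜 E : Type*} [AddCommGroup G] [MeasurableSpace G]
    [MeasurableAdd₂ G] [MeasurableNeg G] {μ : Measure G} [SFinite μ] [μ.IsAddLeftInvariant]
    [μ.IsNegInvariant] [NontriviallyNormedField 𝕜] [NormedAddCommGroup E] [NormedSpace ℝ E]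
    [NormedSpace 𝕜 E] {K : G → 𝕜} {h : G → E} {Ω : Set G} {C : ℝ≥0∞}
    (hK : AEStronglyMeasurable K μ) (hh : AEStronglyMeasurable h μ)
    (hC : ∀ s, ∫⁻ t in Ω, ‖K (t - s)‖ₑ ∂μ ≤ C) :
    ∫⁻ t in Ω, ‖(K ⋆[ContinuousLinearMap.lsmul 𝕜 𝕜, μ] h) t‖ₑ ∂μ ≤ C * ∫⁻ s, ‖h s‖ₑ ∂μ := by
  have hac : (μ.restrict Ω).prod μ ≪ μ.prod μ :=
    Measure.restrict_le_self.absolutelyContinuous.prod .rfl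
  have hKsub : AEMeasurable (fun p : G × G ↦ ‖K (p.1 - p.2)‖ₑ) ((μ.restrict Ω).prod μ) :=
    (hK.comp_quasiMeasurePreserving
      (quasiMeasurePreserving_sub_of_right_invariant μ μ)).enorm.mono_ac hac
  calc ∫⁻ t in Ω, ‖(K ⋆[ContinuousLinearMap.lsmul 𝕜 𝕜, μ] h) t‖ₑ ∂μ
      ≤ ∫⁻ t in Ω, ∫⁻ s, ‖K (t - s)‖ₑ * ‖h s‖ₑ ∂μ ∂μ := by
        refine lintegral_mono fun t ↦ ?_
        rw [convolution_eq_swap]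
        refine (enorm_integral_le_lintegral_enorm _).trans_eq ?_
        simp only [ContinuousLinearMap.lsmul_apply, enorm_smul]
    _ = ∫⁻ s, ∫⁻ t in Ω, ‖K (t - s)‖ₑ * ‖h s‖ₑ ∂μ ∂μ :=
        lintegral_lintegral_swap (hKsub.mul hh.enorm.comp_snd)
    _ = ∫⁻ s, (∫⁻ t in Ω, ‖K (t - s)‖ₑ ∂μ) * ‖h s‖ₑ ∂μ := by
        simp only [lintegral_mul_const' _ _ enorm_ne_top]
    _ ≤ ∫⁻ s, C * ‖h s‖ₑ ∂μ := lintegral_mono fun s ↦ by gcongr; exact hC s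
    _ = C * ∫⁻ s, ‖h s‖ₑ ∂μ := lintegral_const_mul'' _ hh.enorm

end Convolution

section Translates

variable {E ι : Type*} [NormedAddCommGroup E] [NormedSpace ℂ E] {c : ι → ℂ}

lemma tsum_enorm_eq_ofReal (hc : Summable fun i ↦ ‖c i‖) :
    ∑' i, ‖c i‖ₑ = ENNReal.ofReal (∑' i, ‖c i‖) := by
  simp only [← ofReal_norm, ENNReal.ofReal_tsum_of_nonneg (fun i ↦ norm_nonneg (c i)) hc]

lemma lintegral_enorm_tsum_smul_le [Countable ι] {X : Type*} [MeasurableSpace X] {μ : Measure X}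
    {C : ℝ≥0∞} {u : ι → X → E} (hu : ∀ i, AEStronglyMeasurable (u i) μ)
    (hC : ∀ i, ∫⁻ x, ‖u i x‖ₑ ∂μ ≤ C) :
    ∫⁻ x, ‖∑' i, c i • u i x‖ₑ ∂μ ≤ (∑' i, ‖c i‖ₑ) * C := by
  calc ∫⁻ x, ‖∑' i, c i • u i x‖ₑ ∂μ
      ≤ ∫⁻ x, ∑' i, ‖c i • u i x‖ₑ ∂μ := lintegral_mono fun x ↦ enorm_tsum_le_tsum_enorm
    _ = ∑' i, ∫⁻ x, ‖c i • u i x‖ₑ ∂μ := lintegral_tsum fun i ↦ ((hu i).const_smul (c i)).enorm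
    _ = ∑' i, ‖c i‖ₑ * ∫⁻ x, ‖u i x‖ₑ ∂μ := by
        simp only [enorm_smul, lintegral_const_mul' _ _ enorm_ne_top]
    _ ≤ ∑' i, ‖c i‖ₑ * C := ENNReal.tsum_le_tsum fun i ↦ by gcongr; exact hC i
    _ = (∑' i, ‖c i‖ₑ) * C := ENNReal.tsum_mul_right

variable {V : Type*} [NormedAddCommGroup V] [InnerProductSpace ℝ V] [FiniteDimensional ℝ V]
  [MeasurableSpace V] [BorelSpace V] {u : V → E} {a : ι → V}

lemma fourier_comp_add_right (u : V → E) (b w : V) :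
    𝓕 (fun x ↦ u (x + b)) w = 𝐞 ⟪b, w⟫ • 𝓕 u w :=
  congr_fun (VectorFourier.fourierIntegral_comp_add_right Real.fourierChar volume (innerₗ V) u b) w

lemma integrable_tsum_smul_comp_add [Countable ι] [CompleteSpace E] (hc : Summable fun i ↦ ‖c i‖)
    (hu : Integrable u) :
    Integrable fun x ↦ ∑' i, c i • u (x + a i) := by
  have htranslate (i : ι) : AEStronglyMeasurable (fun x ↦ u (x + a i)) :=
    (hu.comp_add_right (a i)).aestronglyMeasurable
  refine ⟨.tsum fun i ↦ (htranslate i).const_smul (c i), ?_⟩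
  refine (lintegral_enorm_tsum_smul_le htranslate fun i ↦
    (lintegral_add_right_eq_self (fun x ↦ ‖u x‖ₑ) (a i)).le).trans_lt ?_
  rw [tsum_enorm_eq_ofReal hc]
  exact ENNReal.mul_lt_top ENNReal.ofReal_lt_top hu.hasFiniteIntegral

lemma fourier_tsum_smul_comp_add [Countable ι] (hc : Summable fun i ↦ ‖c i‖) (hu : Integrable u)
    (w : V) :
    𝓕 (fun x ↦ ∑' i, c i • u (x + a i)) w = (∑' i, c i * 𝐞 ⟪a i, w⟫) • 𝓕 u w := by
  let F (i : ι) (x : V) : E := c i • 𝐞 (-⟪x, w⟫) • u (x + a i)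
  have hF (i : ι) : Integrable (F i) :=
    ((Real.fourierIntegral_convergent_iff w).2 (hu.comp_add_right (a i))).smul (c i)
  have hFsum : Summable fun i ↦ ∫ x, ‖F i x‖ := by
    simp only [F, norm_smul, Circle.norm_smul, integral_const_mul,
      integral_add_right_eq_self fun x ↦ ‖u x‖]
    exact hc.mul_right _
  have hphase : Summable fun i ↦ c i * (𝐞 ⟪a i, w⟫ : ℂ) :=
    .of_norm (by simpa only [norm_mul, Circle.norm_coe, mul_one] using hc)
  calc 𝓕 (fun x ↦ ∑' i, c i • u (x + a i)) w = ∫ x, ∑' i, F i x := by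
        rw [Real.fourier_eq]
        congr with x
        rw [← tsum_const_smul']
        simp only [F, smul_comm (c _)]
    _ = ∑' i, ∫ x, F i x := (integral_tsum_of_summable_integral_norm hF hFsum).symm
    _ = ∑' i, (c i * 𝐞 ⟪a i, w⟫) • 𝓕 u w := by
        congr with i
        rw [integral_smul, ← Real.fourier_eq (fun x ↦ u (x + a i)), fourier_comp_add_right,
          mul_smul, Circle.smul_def]
    _ = _ := hphase.tsum_smul_const _

end Translates

section AlternatingTail

/-- The tails `a n - a (n + 1) + a (n + 2) - ⋯` of an alternating series, normalized so that the
leading sign is positive. -/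
noncomputable def alternatingTail (a : ℕ → ℝ) (n : ℕ) : ℝ := ∑' j, (-1) ^ j * a (n + j)

variable {a : ℕ → ℝ}

lemma alternatingTail_add_alternatingTail_succ (ha : Summable a) (n : ℕ) :
    alternatingTail a n + alternatingTail a (n + 1) = a n := by
  have htail : Summable fun j ↦ (-1) ^ j * a (n + j) :=
    (ha.comp_injective (add_right_injective n)).alternating
  simp only [alternatingTail, htail.tsum_eq_zero_add, pow_succ, mul_neg_one, neg_mul, tsum_neg,
    add_right_comm n 1, ← add_assoc]
  simp

lemma alternatingTail_nonneg (ha : Summable a) (hanti : Antitone a) (n : ℕ) :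
    0 ≤ alternatingTail a n := by
  have hlim := (ha.comp_injective (add_right_injective n)).tendsto_alternating_series_tsum
  simpa using! (hanti.comp_monotone fun _ _ h ↦ Nat.add_le_add_left h n
    : Antitone fun j ↦ a (n + j)).alternating_series_le_tendsto hlim 0

lemma summable_alternatingTail (ha : Summable a) (hanti : Antitone a) :
    Summable (alternatingTail a) :=
  .of_nonneg_of_le (alternatingTail_nonneg ha hanti) (fun n ↦ by
    linarith [alternatingTail_add_alternatingTail_succ ha n,
      alternatingTail_nonneg ha hanti (n + 1)]) ha

end AlternatingTail

section DivSin

lemma summable_one_div_odd_sq : Summable fun k : ℕ ↦ 1 / (2 * k + 1 : ℝ) ^ 2 := by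
  have hsq : Summable fun n : ℕ ↦ 1 / (n : ℝ) ^ 2 := Real.summable_one_div_nat_pow.2 one_lt_two
  exact_mod_cast hsq.comp_injective (i := fun k ↦ 2 * k + 1) fun k l hkl ↦ by simpa using hkl

lemma antitone_one_div_odd_sq : Antitone fun k : ℕ ↦ 1 / (2 * k + 1 : ℝ) ^ 2 := by
  intro k l hkl
  dsimp only
  gcongr

/-- The coefficients of the expansion `x / sin x = ∑ n : ℤ, divSinCoeff n * exp (2 * I * n * x)`
on `[-π / 2, π / 2]`. -/
noncomputable def divSinCoeff (n : ℤ) : ℝ :=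
  (-1) ^ n * (4 / π * alternatingTail (fun k ↦ 1 / (2 * k + 1) ^ 2) n.natAbs)

lemma abs_divSinCoeff (n : ℤ) :
    |divSinCoeff n| = 4 / π * alternatingTail (fun k ↦ 1 / (2 * k + 1) ^ 2) n.natAbs := by
  have htail := alternatingTail_nonneg summable_one_div_odd_sq antitone_one_div_odd_sq n.natAbs
  rw [divSinCoeff, abs_mul, abs_zpow, abs_neg, abs_one, one_zpow, one_mul,
    abs_of_nonneg (by positivity)]

lemma summable_abs_divSinCoeff : Summable fun n ↦ |divSinCoeff n| := by
  have htail := summable_alternatingTail summable_one_div_odd_sq antitone_one_div_odd_sq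
  simp only [abs_divSinCoeff]
  exact .mul_left _ (.of_nat_of_neg (by simpa using htail) (by simpa using htail))

lemma summable_norm_divSinCoeff : Summable fun n ↦ ‖(divSinCoeff n : ℂ)‖ := by
  simpa only [Complex.norm_real] using! summable_abs_divSinCoeff

lemma divSinCoeff_sub_divSinCoeff_add_one (n : ℤ) :
    divSinCoeff n - divSinCoeff (n + 1) = 4 / π * ((-1) ^ n / (2 * n + 1) ^ 2) := by
  have htail (m : ℕ) := alternatingTail_add_alternatingTail_succ summable_one_div_odd_sq m
  have hsign : (-1 : ℝ) ^ (n + 1) = -(-1) ^ n := by rw [zpow_add_one₀ (by norm_num), mul_neg_one]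
  rw [divSinCoeff, divSinCoeff, hsign]
  obtain ⟨m, rfl | rfl⟩ : ∃ m : ℕ, n = m ∨ n = -(m + 1 : ℤ) := by
    rcases n.eq_nat_or_neg with ⟨m, rfl | rfl⟩
    · exact ⟨m, .inl rfl⟩
    · rcases m with - | m
      · exact ⟨0, by simp⟩
      · exact ⟨m, .inr (by simp)⟩
  · rw [show (m + 1 : ℤ).natAbs = m + 1 by omega, Int.natAbs_natCast, Int.cast_natCast,
      div_eq_mul_one_div (_ ^ _), ← htail m]
    ring
  · rw [show (-(m + 1 : ℤ) + 1).natAbs = m by omega, show (-(m + 1 : ℤ)).natAbs = m + 1 by omega,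
      show (2 * ((-(m + 1 : ℤ) : ℤ) : ℝ) + 1) ^ 2 = (2 * m + 1) ^ 2 by push_cast; ring,
      div_eq_mul_one_div (_ ^ _), ← htail m]
    ring

lemma fourier_add_half (n : ℤ) (y : ℝ) :
    fourier n ((y + 1 / 2 : ℝ) : UnitAddCircle) = (-1) ^ n * fourier n (y : UnitAddCircle) := by
  rw [fourier_coe_apply, fourier_coe_apply, ← Complex.exp_pi_mul_I, ← Complex.exp_int_mul,
    ← Complex.exp_add]
  push_cast
  ring_nf

lemma hasSum_one_div_odd_sq_mul_fourier {y : ℝ} (hy : y ∈ Icc 0 (1 / 2)) :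
    HasSum (fun n : ℤ ↦ 1 / (2 * n + 1 : ℂ) ^ 2 * fourier (2 * n + 1) (y : UnitAddCircle))
      (π ^ 2 * (1 / 4 - y) : ℂ) := by
  obtain ⟨hy₀, hy₁⟩ := hy
  -- Subtracting the Fourier series of `B₂` at two antipodal points leaves the odd frequencies.
  have hdiff := (hasSum_one_div_pow_mul_fourier_mul_bernoulliFun le_rfl (x := y)
      ⟨hy₀, by linarith⟩).sub
    (hasSum_one_div_pow_mul_fourier_mul_bernoulliFun le_rfl (x := y + 1 / 2)
      ⟨by linarith, by linarith⟩)
  have hinj : Function.Injective fun n : ℤ ↦ 2 * n + 1 := fun m n hmn ↦ by simpa using hmn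
  rw [← hinj.hasSum_iff fun n hn ↦ ?_] at hdiff
  · convert! hdiff.mul_left (1 / 2) using 1
    · funext n
      have hsign : (-1 : ℂ) ^ (2 * n + 1) = -1 := (odd_two_mul_add_one n).neg_one_zpow
      simp only [Function.comp, fourier_add_half, hsign]
      push_cast
      ring
    · simp only [bernoulliFun_two]
      push_cast
      linear_combination π ^ 2 * (1 / 4 - (y : ℂ)) * Complex.I_sq
  · have heven : Even n := by
      rw [← Int.not_odd_iff_even]
      exact fun ⟨m, hm⟩ ↦ hn ⟨m, hm.symm⟩
    rw [fourier_add_half, heven.neg_one_zpow, one_mul, sub_self]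

open Complex in
lemma hasSum_neg_one_zpow_div_odd_sq_mul_exp {x : ℝ} (hx : |x| ≤ π / 2) :
    HasSum (fun n : ℤ ↦ (-1 : ℂ) ^ n / (2 * n + 1) ^ 2 * exp ((2 * n + 1) * x * I))
      (π * x * I / 2) := by
  obtain ⟨hx₁, hx₂⟩ := abs_le.1 hx
  have hpi := Real.pi_pos
  obtain ⟨y, hxy⟩ : ∃ y : ℝ, 2 * π * y = x + π / 2 := ⟨(x + π / 2) / (2 * π), by field_simp⟩
  have hxy' : (2 * π * y : ℂ) = x + π / 2 := by exact_mod_cast hxy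
  have hfourier (n : ℤ) : fourier (2 * n + 1) (y : UnitAddCircle) =
      I * (-1) ^ n * exp ((2 * n + 1) * x * I) := by
    have hphase : 2 * π * I * (2 * n + 1 : ℤ) * y / (1 : ℝ) =
        π / 2 * I + n * (π * I) + (2 * n + 1) * x * I := by
      push_cast
      linear_combination (2 * n + 1) * I * hxy'
    rw [fourier_coe_apply, hphase, Complex.exp_add, Complex.exp_add, exp_pi_div_two_mul_I,
      exp_int_mul, exp_pi_mul_I]
  convert! (hasSum_one_div_odd_sq_mul_fourier (y := y) ⟨by nlinarith, by nlinarith⟩).mul_left (-I)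
    using 1
  · funext n
    rw [hfourier]
    linear_combination (-1 : ℂ) ^ n / (2 * n + 1) ^ 2 * exp ((2 * n + 1) * x * I) * I_sq
  · linear_combination -I * π / 2 * hxy'

open Complex in
lemma tsum_mul_exp_mul_sin {c : ℤ → ℂ} (hc : Summable fun n ↦ ‖c n‖) (x : ℝ) :
    (∑' n, c n * exp (2 * I * n * x)) * (2 * I * sin x) =
      ∑' n, (c n - c (n + 1)) * exp ((2 * n + 1) * x * I) := by
  let e (n : ℤ) : ℂ := exp ((2 * n + 1) * x * I)
  have he (n : ℤ) : ‖e n‖ = 1 := by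
    simpa [e] using norm_exp_ofReal_mul_I ((2 * n + 1) * x)
  have hsummable (k : ℤ) : Summable fun n ↦ c n * e (n + k) :=
    .of_norm (by simpa only [norm_mul, he, mul_one] using hc)
  have hsin (n : ℤ) : c n * exp (2 * I * n * x) * (2 * I * sin x) =
      c n * e (n + 0) - c n * e (n + -1) := by
    have he₀ : e (n + 0) = exp (2 * I * n * x) * exp (x * I) := by
      rw [← Complex.exp_add]
      simp only [e]
      ring_nf
    have he₁ : e (n + -1) = exp (2 * I * n * x) * exp (-x * I) := by
      rw [← Complex.exp_add]
      simp only [e]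
      push_cast
      ring_nf
    rw [he₀, he₁]
    linear_combination c n * exp (2 * I * n * x) *
      (two_sin (x : ℂ) * I + (exp (-x * I) - exp (x * I)) * I_sq)
  have hshift : HasSum (fun n ↦ c (n + 1) * e n) (∑' n, c n * e (n + -1)) := by
    simpa [Function.comp_def] using (Equiv.addRight (1 : ℤ)).hasSum_iff.2 (hsummable (-1)).hasSum
  calc (∑' n, c n * exp (2 * I * n * x)) * (2 * I * sin x)
      = ∑' n, c n * e (n + 0) - ∑' n, c n * e (n + -1) := by
        rw [← tsum_mul_right, tsum_congr hsin, (hsummable 0).tsum_sub (hsummable (-1))]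
    _ = ∑' n, (c n - c (n + 1)) * e n := by
        simpa only [add_zero, sub_mul] using ((hsummable 0).hasSum.sub hshift).tsum_eq.symm

open Complex in
lemma tsum_divSinCoeff_mul_exp_mul_sin {x : ℝ} (hx : |x| ≤ π / 2) :
    (∑' n : ℤ, divSinCoeff n * exp (2 * I * n * x)) * sin x = x := by
  have hterm (n : ℤ) :
      (divSinCoeff n - divSinCoeff (n + 1)) * exp ((2 * n + 1) * x * I) =
        4 / π * ((-1) ^ n / (2 * n + 1) ^ 2 * exp ((2 * n + 1) * x * I)) := by
    rw [← ofReal_sub, divSinCoeff_sub_divSinCoeff_add_one]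
    push_cast
    ring
  have hsum := tsum_mul_exp_mul_sin
    (c := fun n ↦ divSinCoeff n) summable_norm_divSinCoeff x
  rw [tsum_congr hterm, tsum_mul_left, (hasSum_neg_one_zpow_div_odd_sq_mul_exp hx).tsum_eq] at hsum
  refine mul_left_cancel₀ (mul_ne_zero two_ne_zero I_ne_zero) ?_
  calc 2 * I * ((∑' n : ℤ, divSinCoeff n * exp (2 * I * n * x)) * sin x)
      = 4 / π * (π * x * I / 2) := by rw [← hsum]; ring
    _ = 2 * I * x := by
        field_simp [ofReal_ne_zero.2 Real.pi_ne_zero]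
        ring

lemma tsum_abs_divSinCoeff : ∑' n, |divSinCoeff n| = π / 2 := by
  have h := tsum_divSinCoeff_mul_exp_mul_sin (x := π / 2) (abs_of_pos Real.pi_div_two_pos).le
  have hterm (n : ℤ) :
      divSinCoeff n * Complex.exp (2 * Complex.I * n * (π / 2 : ℝ)) = |divSinCoeff n| := by
    have hphase : 2 * Complex.I * n * (π / 2 : ℝ) = n * (π * Complex.I) := by
      push_cast
      ring
    have hsign : (-1 : ℂ) ^ n * (-1) ^ n = 1 := by rw [← mul_zpow, neg_one_mul, neg_neg, one_zpow]
    rw [hphase, Complex.exp_int_mul, Complex.exp_pi_mul_I, abs_divSinCoeff, divSinCoeff]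
    push_cast
    rw [mul_right_comm, hsign, one_mul]
  rw [← Complex.ofReal_sin, Real.sin_pi_div_two, tsum_congr hterm, ← Complex.ofReal_tsum,
    Complex.ofReal_one, mul_one] at h
  exact_mod_cast h

end DivSin

section Kernel

variable {W : ℝ}

/-- The maximum Nyquist density `ρ_ℝ(Ω, W)`: the largest measure of the part of `Ω` in a window of
length `1 / W`, relative to the length of the window. -/
noncomputable def maxNyquistDensity (W : ℝ) (Ω : Set ℝ) : ℝ :=
  W * ⨆ t, volume.real (Ω ∩ Icc t (t + 1 / W))

lemma ofReal_mul_volume_inter_Icc_le (hW : 0 < W) (Ω : Set ℝ) (t : ℝ) :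
    ENNReal.ofReal W * volume (Ω ∩ Icc t (t + 1 / W)) ≤
      ENNReal.ofReal (maxNyquistDensity W Ω) := by
  have hbdd : BddAbove (range fun t ↦ volume.real (Ω ∩ Icc t (t + 1 / W))) := by
    refine ⟨1 / W, ?_⟩
    rintro _ ⟨t, rfl⟩
    refine (measureReal_mono inter_subset_right measure_Icc_lt_top.ne).trans_eq ?_
    rw [Real.volume_real_Icc_of_le (by simp [hW.le]), add_sub_cancel_left]
  have hfin : volume (Ω ∩ Icc t (t + 1 / W)) ≠ ∞ :=
    measure_ne_top_of_subset inter_subset_right measure_Icc_lt_top.ne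
  rw [← ofReal_measureReal hfin, ← ENNReal.ofReal_mul hW.le]
  exact ENNReal.ofReal_le_ofReal (mul_le_mul_of_nonneg_left (le_ciSup hbdd t) hW.le)

/-- The box function of width `1 / W` centred at the origin, normalized to have integral one. -/
noncomputable def normalizedBox (W : ℝ) : ℝ → ℂ :=
  (Icc (-(1 / (2 * W))) (1 / (2 * W))).indicator fun _ ↦ (W : ℂ)

lemma integrable_normalizedBox (W : ℝ) : Integrable (normalizedBox W) :=
  (integrableOn_const measure_Icc_lt_top.ne).integrable_indicator measurableSet_Icc

lemma fourier_normalizedBox (hW : 0 < W) (w : ℝ) :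
    𝓕 (normalizedBox W) w = Real.sinc (π * w / W) := by
  have hwidth : -(1 / (2 * W)) ≤ 1 / (2 * W) := neg_le_self (by positivity)
  let e (t : ℝ) : ℂ := Complex.exp (t * Complex.I)
  have hint : 𝓕 (normalizedBox W) w =
      W * ∫ t in -(1 / (2 * W))..1 / (2 * W), e (-2 * π * w * t) := by
    rw [Real.fourier_real_eq_integral_exp_smul, intervalIntegral.integral_of_le hwidth,
      ← integral_Icc_eq_integral_Ioc, ← integral_const_mul, ← integral_indicator measurableSet_Icc]
    congr with t
    simp only [normalizedBox, indicator_apply, e, mul_right_comm _ t w]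
    split_ifs
    · exact mul_comm _ _
    · exact smul_zero _
  obtain rfl | hw := eq_or_ne w 0
  · have he (t : ℝ) : e (-2 * π * 0 * t) = 1 := by simp [e]
    have hwidth' : 1 / (2 * W) - -(1 / (2 * W)) = W⁻¹ := by field_simp; norm_num
    simp only [hint, he, intervalIntegral.integral_const, hwidth', Complex.real_smul]
    rw [mul_one, ← Complex.ofReal_mul, mul_inv_cancel₀ hW.ne', mul_zero, zero_div, Real.sinc_zero]
  · have hr : -2 * π * w * (1 / (2 * W)) = -(π * w / W) := by field_simp
    rw [hint, intervalIntegral.integral_comp_mul_left e (by simp [Real.pi_ne_zero, hw]), mul_neg,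
      hr, integral_exp_mul_I_eq_sinc, Real.sinc_neg, Complex.real_smul]
    push_cast
    field_simp [Complex.ofReal_ne_zero.2 hW.ne', Complex.ofReal_ne_zero.2 hw,
      Complex.ofReal_ne_zero.2 Real.pi_ne_zero]

lemma setLIntegral_enorm_normalizedBox_add_le (hW : 0 < W) (Ω : Set ℝ) (b : ℝ) :
    ∫⁻ t in Ω, ‖normalizedBox W (t + b)‖ₑ ≤ ENNReal.ofReal (maxNyquistDensity W Ω) := by
  set s : ℝ := -(1 / (2 * W)) - b with hs
  have hbox (t : ℝ) : ‖normalizedBox W (t + b)‖ₑ =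
      (Icc s (s + 1 / W)).indicator (fun _ ↦ ENNReal.ofReal W) t := by
    have hmem : t + b ∈ Icc (-(1 / (2 * W))) (1 / (2 * W)) ↔ t ∈ Icc s (s + 1 / W) := by
      have hhalf : 1 / W = 1 / (2 * W) + 1 / (2 * W) := by field_simp; norm_num
      simp only [mem_Icc, hs, hhalf]
      constructor <;> rintro ⟨h₁, h₂⟩ <;> constructor <;> linarith
    simp only [normalizedBox, indicator_apply, hmem]
    split_ifs
    · rw [← ofReal_norm, Complex.norm_of_nonneg hW.le]
    · exact enorm_zero
  simp only [hbox]
  rw [lintegral_indicator_const measurableSet_Icc, Measure.restrict_apply measurableSet_Icc,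
    inter_comm]
  exact ofReal_mul_volume_inter_Icc_le hW Ω s

/-- An integrable step function with steps of length `1 / W` whose Fourier transform is one on
`[-W / 2, W / 2]` away from the origin. -/
noncomputable def divSinKernel (W : ℝ) (t : ℝ) : ℂ :=
  ∑' n : ℤ, (divSinCoeff n : ℂ) • normalizedBox W (t + n / W)

lemma integrable_divSinKernel (W : ℝ) : Integrable (divSinKernel W) :=
  integrable_tsum_smul_comp_add summable_norm_divSinCoeff (integrable_normalizedBox W)

lemma fourier_divSinKernel (hW : 0 < W) {w : ℝ} (hw₀ : w ≠ 0) (hw : |w| ≤ W / 2) :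
    𝓕 (divSinKernel W) w = 1 := by
  set x : ℝ := π * w / W with hx
  have hx₀ : x ≠ 0 := by positivity
  have hxle : |x| ≤ π / 2 := by
    rw [hx, abs_div, abs_mul, abs_of_pos Real.pi_pos, abs_of_pos hW, div_le_iff₀ hW]
    nlinarith [Real.pi_pos]
  have hphase (n : ℤ) : (𝐞 ⟪(n / W : ℝ), w⟫ : ℂ) = Complex.exp (2 * Complex.I * n * x) := by
    rw [Real.fourierChar_apply, hx, RCLike.inner_apply, conj_trivial]
    push_cast
    ring_nf
  calc 𝓕 (divSinKernel W) w
      = (∑' n : ℤ, (divSinCoeff n : ℂ) * 𝐞 ⟪(n / W : ℝ), w⟫) • 𝓕 (normalizedBox W) w :=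
        fourier_tsum_smul_comp_add summable_norm_divSinCoeff (integrable_normalizedBox W) w
    _ = (∑' n : ℤ, divSinCoeff n * Complex.exp (2 * Complex.I * n * x)) *
          (Complex.sin x / x) := by
        rw [tsum_congr fun n ↦ congr_arg _ (hphase n), fourier_normalizedBox hW,
          Real.sinc_of_ne_zero hx₀, smul_eq_mul,
          Complex.ofReal_div (Real.sin x), Complex.ofReal_sin]
    _ = 1 := by
        rw [← mul_div_assoc, tsum_divSinCoeff_mul_exp_mul_sin hxle,
          div_self (Complex.ofReal_ne_zero.2 hx₀)]

lemma setLIntegral_enorm_divSinKernel_sub_le (hW : 0 < W) (Ω : Set ℝ) (s : ℝ) :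
    ∫⁻ t in Ω, ‖divSinKernel W (t - s)‖ₑ ≤
      ENNReal.ofReal (π / 2) * ENNReal.ofReal (maxNyquistDensity W Ω) := by
  have hcoeff : ∑' n, ‖(divSinCoeff n : ℂ)‖ₑ = ENNReal.ofReal (π / 2) := by
    rw [tsum_enorm_eq_ofReal summable_norm_divSinCoeff, ← tsum_abs_divSinCoeff]
    simp only [Complex.norm_real, Real.norm_eq_abs]
  have hmeas (n : ℤ) :
      AEStronglyMeasurable (fun t ↦ normalizedBox W (t + (n / W - s))) (volume.restrict Ω) :=
    ((integrable_normalizedBox W).comp_add_right _).aestronglyMeasurable.restrict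
  have hshift (t : ℝ) (n : ℤ) : t - s + n / W = t + (n / W - s) := by ring
  simp only [divSinKernel, hshift, ← hcoeff]
  exact lintegral_enorm_tsum_smul_le hmeas fun n ↦ setLIntegral_enorm_normalizedBox_add_le hW Ω _

end Kernel

section Recovery

variable {E : Type*} [NormedAddCommGroup E]

/-- Integrable functions of bandwidth `W`: the band `[-π W, π W]` of angular frequencies is
`[-W / 2, W / 2]` in the normalization of `𝓕`. -/
structure IsBandlimited [NormedSpace ℂ E] (W : ℝ) (h : ℝ → E) : Prop where
  integrable : Integrable h
  fourier_eq_zero : ∀ w, W / 2 < |w| → 𝓕 h w = 0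

namespace IsBandlimited

variable [NormedSpace ℂ E] {W : ℝ} {f g h : ℝ → E}

lemma sub (hf : IsBandlimited W f) (hg : IsBandlimited W g) : IsBandlimited W (f - g) :=
  ⟨hf.integrable.sub hg.integrable, fun w hw ↦ by
    rw [fourier_sub_of_integrable hf.integrable hg.integrable, hf.fourier_eq_zero w hw,
      hg.fourier_eq_zero w hw, sub_zero]⟩

lemma of_integral_mul_exp_eq_zero {h : ℝ → ℂ} (hh : Integrable h)
    (hsupp : ∀ ξ ∉ Icc (-(π * W)) (π * W),
      ∫ t : ℝ, h t * Complex.exp (-(Complex.I * ξ * t)) = 0) :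
    IsBandlimited W h := by
  refine ⟨hh, fun w hw ↦ ?_⟩
  have hξ : 2 * π * w ∉ Icc (-(π * W)) (π * W) := by
    rw [mem_Icc, ← abs_le, abs_mul, abs_of_pos Real.two_pi_pos, not_le]
    nlinarith [Real.pi_pos]
  rw [Real.fourier_real_eq_integral_exp_smul, ← hsupp _ hξ]
  congr with t
  rw [smul_eq_mul, mul_comm]
  congr 2
  push_cast
  ring

variable [CompleteSpace E]

lemma ae_eq_convolution_divSinKernel (hW : 0 < W) (hh : IsBandlimited W h) :
    h =ᵐ[volume] divSinKernel W ⋆[ContinuousLinearMap.lsmul ℂ ℂ] h := by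
  refine ae_eq_convolution_of_fourier_eq_one (integrable_divSinKernel W) hh.integrable ?_
  filter_upwards [Measure.ae_ne volume 0] with w hw₀ hw
  exact fourier_divSinKernel hW hw₀ (not_lt.1 fun hlt ↦ hw (hh.fourier_eq_zero w hlt))

/-- The **Donoho–Logan large sieve inequality**. -/
theorem setIntegral_norm_le (hW : 0 < W) (hh : IsBandlimited W h) (Ω : Set ℝ) :
    ∫ t in Ω, ‖h t‖ ≤ π / 2 * maxNyquistDensity W Ω * ∫ t, ‖h t‖ := by
  have hρ : 0 ≤ maxNyquistDensity W Ω :=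
    mul_nonneg hW.le (Real.iSup_nonneg fun t ↦ measureReal_nonneg)
  refine (ENNReal.ofReal_le_ofReal_iff (by positivity)).1 ?_
  calc ENNReal.ofReal (∫ t in Ω, ‖h t‖) = ∫⁻ t in Ω, ‖h t‖ₑ :=
        ofReal_integral_norm_eq_lintegral_enorm hh.integrable.integrableOn
    _ = ∫⁻ t in Ω, ‖(divSinKernel W ⋆[ContinuousLinearMap.lsmul ℂ ℂ] h) t‖ₑ :=
        lintegral_congr_ae <| ae_restrict_of_ae <|
          (hh.ae_eq_convolution_divSinKernel hW).fun_comp enorm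
    _ ≤ ENNReal.ofReal (π / 2) * ENNReal.ofReal (maxNyquistDensity W Ω) * ∫⁻ t, ‖h t‖ₑ :=
        setLIntegral_enorm_convolution_le (integrable_divSinKernel W).aestronglyMeasurable
          hh.integrable.aestronglyMeasurable (setLIntegral_enorm_divSinKernel_sub_le hW Ω)
    _ = ENNReal.ofReal (π / 2 * maxNyquistDensity W Ω * ∫ t, ‖h t‖) := by
        rw [← ofReal_integral_norm_eq_lintegral_enorm hh.integrable,
          ← ENNReal.ofReal_mul (by positivity), ← ENNReal.ofReal_mul (by positivity)]

end IsBandlimited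

lemma integral_norm_add_integral_norm_le_of_ae_eq_zero {X : Type*} [MeasurableSpace X]
    {μ : Measure X} [SFinite μ] {Ω : Set X} {N h : X → E} (hN : Integrable N μ)
    (hh : Integrable h μ) (hNΩ : ∀ᵐ x ∂μ, x ∉ Ω → N x = 0) :
    ∫ x, ‖N x‖ ∂μ + ∫ x, ‖h x‖ ∂μ ≤ ∫ x, ‖N x + h x‖ ∂μ + 2 * ∫ x in Ω, ‖h x‖ ∂μ := by
  have hmeas := measurableSet_toMeasurable μ Ω
  have hsum : Integrable (fun x ↦ ‖N x + h x‖) μ := (hN.add hh).norm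
  have hind : Integrable ((toMeasurable μ Ω).indicator fun x ↦ 2 * ‖h x‖) μ :=
    (hh.norm.const_mul 2).indicator hmeas
  rw [← Measure.restrict_toMeasurable_of_sFinite Ω, ← integral_const_mul,
    ← integral_indicator hmeas, ← integral_add hN.norm hh.norm, ← integral_add hsum hind]
  refine integral_mono_ae (hN.norm.add hh.norm) (hsum.add hind) ?_
  filter_upwards [hNΩ] with x hx
  by_cases hxΩ : x ∈ toMeasurable μ Ω
  · have htri : ‖N x‖ ≤ ‖N x + h x‖ + ‖h x‖ := norm_le_add_norm_add _ _
    simp only [indicator_of_mem hxΩ]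
    linarith
  · simp [hx fun h ↦ hxΩ (subset_toMeasurable μ Ω h), indicator_of_notMem hxΩ]

theorem bandlimited_recovery_l1_minimization_general [NormedSpace ℂ E] [CompleteSpace E] {W : ℝ}
    (hW : 0 < W) {f g N : ℝ → E} {Ω : Set ℝ} (hf : IsBandlimited W f) (hg : IsBandlimited W g)
    (hρ : maxNyquistDensity W Ω < 1 / π) (hN : Integrable N)
    (hNΩ : ∀ᵐ t, t ∉ Ω → N t = 0) :
    ∫ t, ‖N t‖ ≤ ∫ t, ‖f t + N t - g t‖ ∧
      (¬ g =ᵐ[volume] f → ∫ t, ‖N t‖ < ∫ t, ‖f t + N t - g t‖) := by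
  have hh := hf.sub hg
  have hlogan := integral_norm_add_integral_norm_le_of_ae_eq_zero hN hh.integrable hNΩ
  have hsieve := hh.setIntegral_norm_le hW Ω
  have hgap : 0 < 1 - π * maxNyquistDensity W Ω := by
    rw [lt_div_iff₀' Real.pi_pos] at hρ
    linarith
  have hbound : (∫ t, ‖N t‖) + (1 - π * maxNyquistDensity W Ω) * ∫ t, ‖(f - g) t‖ ≤
      ∫ t, ‖f t + N t - g t‖ := by
    have hresidual (t : ℝ) : f t + N t - g t = N t + (f - g) t := by rw [Pi.sub_apply]; abel
    simp only [hresidual]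
    linarith
  refine ⟨hbound.trans' (le_add_of_nonneg_right (by positivity)), fun hgf ↦ ?_⟩
  have hpos : 0 < ∫ t, ‖(f - g) t‖ := by
    refine (integral_nonneg fun t ↦ norm_nonneg _).lt_of_ne' fun h0 ↦ hgf ?_
    rw [integral_eq_zero_iff_of_nonneg (fun t ↦ norm_nonneg _) hh.integrable.norm] at h0
    exact ((sub_ae_eq_zero f g).1 (h0.mono fun t ↦ norm_eq_zero.1)).symm
  exact hbound.trans_lt' (lt_add_of_pos_right _ (by positivity))

end Recovery

/-- **perfect recovery of band-limited signals from corrupted data.**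
Let `W > 0`, let `f ∈ L¹(ℝ)` be nonzero with (distributional) Fourier transform
`f̂(ξ) = ∫ f(t) e^{-iξt} dt` supported in `[-πW, πW]`, and let `Ω ⊆ ℝ` be measurable
with `ρ_ℝ(Ω, W) = W · sup_t |Ω ∩ [t, t + 1/W]| < 1/π`.  Let the noise `N ∈ L¹(ℝ)`
vanish a.e. outside `Ω`.  Then `f` is the unique minimizer, over all band-limited
`g ∈ L¹(ℝ)`, of `g ↦ ‖(f + N) - g‖₁`: for every such `g`, `‖N‖₁ ≤ ‖(f + N) - g‖₁`,
with strict inequality whenever `g ≠ f` in `L¹(ℝ)`. -/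
theorem bandlimited_recovery_l1_minimization
    (W : ℝ) (hW : 0 < W)
    (f : ℝ → ℂ) (hf : Integrable f volume)
    (hf0 : ¬ (f =ᵐ[volume] (0 : ℝ → ℂ)))
    (hfsupp : ∀ ξ : ℝ, ξ ∉ Set.Icc (-(Real.pi * W)) (Real.pi * W) →
      (∫ t : ℝ, f t * Complex.exp (-(Complex.I * ξ * t))) = 0)
    (Ω : Set ℝ) (hΩ : MeasurableSet Ω)
    (hρ : W * (⨆ t : ℝ, (volume (Ω ∩ Set.Icc t (t + 1 / W))).toReal) < 1 / Real.pi)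
    (N : ℝ → ℂ) (hN : Integrable N volume)
    (hNsupp : ∀ᵐ t ∂(volume : Measure ℝ), t ∉ Ω → N t = 0) :
    ∀ g : ℝ → ℂ, Integrable g volume →
      (∀ ξ : ℝ, ξ ∉ Set.Icc (-(Real.pi * W)) (Real.pi * W) →
        (∫ t : ℝ, g t * Complex.exp (-(Complex.I * ξ * t))) = 0) →
      (∫ t : ℝ, ‖N t‖) ≤ (∫ t : ℝ, ‖(f t + N t) - g t‖) ∧
        (¬ (g =ᵐ[volume] f) →
          (∫ t : ℝ, ‖N t‖) < ∫ t : ℝ, ‖(f t + N t) - g t‖) := by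
  intro g hg hgsupp
  exact bandlimited_recovery_l1_minimization_general hW (.of_integral_mul_exp_eq_zero hf hfsupp)
    (.of_integral_mul_exp_eq_zero hg hgsupp) hρ hN hNsupp
end
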